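/- arXiv:1810.00877 — 2 statements merged into one kernel-verified Lean document; each statement's English description precedes it below -/
import Mathlib

section
/- Let 0 < δ < 1/2, ε > 0, Δ > 0. Then the minimum noise amplitude V_opt^{L1}(ε, δ, Δ) satisfies the upper bound V_opt^{L1}(ε, δ, Δ) ≤ (Δ/ε)·(1 − log(1 + (e^ε − 1)/(2δ)) / ((e^ε − 1)/(2δ))). -/
open MeasureTheory Real

/-- The (ε,δ)-differential-privacy constraint with sensitivity `Δ` on a noise
distribution `P` on ℝ: for every `d` with `|d| ≤ Δ` and every Borel set `S`,
`P(S) ≤ e^ε · P(S + d) + δ`. -/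
def SatisfiesDP (ε δ Δ : ℝ) (P : Measure ℝ) : Prop :=
  ∀ d : ℝ, |d| ≤ Δ → ∀ S : Set ℝ, MeasurableSet S →
    P S ≤ ENNReal.ofReal (Real.exp ε) * P ((fun s => s + d) '' S) + ENNReal.ofReal δ

/-- The minimum noise amplitude: the infimum of `∫ |x| dP(x)` over all Borel
probability measures `P` on ℝ satisfying the (ε,δ)-DP constraint with sensitivity Δ. -/
noncomputable def VoptL1 (ε δ Δ : ℝ) : ENNReal :=
  ⨅ (P : Measure ℝ) (_ : IsProbabilityMeasure P) (_ : SatisfiesDP ε δ Δ P),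
    ∫⁻ x : ℝ, ENNReal.ofReal |x| ∂P

/-!
The bound comes from the truncated Laplace distribution, with density proportional to
`exp (-|x| / b)` on `[-A, A]`. Shifting this density by `|d| ≤ Δ` changes it by a factor of at most
`exp (Δ / b)` wherever both copies are positive, so the privacy loss exceeds `Δ / b` only on the
part of the support, of length at most `Δ` at one end, which the shift moves out of `[-A, A]`. Its
mass is at most `(exp (Δ / b) - 1) / (2 * (exp (A / b) - 1))`, while the mean absolute value is
`b - A / (exp (A / b) - 1)`. Choose `b = Δ / ε` and then `A` so that the mass bound equals `δ`.
-/

open scoped ENNReal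

lemma one_sub_exp_neg_div_pos {a b : ℝ} (hb : 0 < b) (ha : 0 < a) : 0 < 1 - exp (-a / b) :=
  sub_pos.2 (exp_lt_one_iff.2 (div_neg_of_neg_of_pos (neg_neg_of_pos ha) hb))

lemma lintegral_comp_abs (g : ℝ → ℝ≥0∞) : ∫⁻ x, g |x| = 2 * ∫⁻ x in Set.Ioi 0, g x := by
  have right : ∫⁻ x in Set.Ioi 0, g |x| = ∫⁻ x in Set.Ioi 0, g x :=
    setLIntegral_congr_fun measurableSet_Ioi fun x hx => by rw [abs_of_pos hx]
  have left : ∫⁻ x in Set.Iic 0, g |x| = ∫⁻ x in Set.Ioi 0, g |x| := by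
    have := (Measure.measurePreserving_neg (volume : Measure ℝ)).setLIntegral_comp_emb
      (MeasurableEquiv.neg ℝ).measurableEmbedding (fun x => g |x|) (Set.Ioi 0)
    simpa [restrict_Iio_eq_restrict_Iic] using this.symm
  rw [← lintegral_add_compl _ measurableSet_Ioi, Set.compl_Ioi, left, right, two_mul]

lemma setLIntegral_Icc_comp_abs (g : ℝ → ℝ≥0∞) (a : ℝ) :
    ∫⁻ x in Set.Icc (-a) a, g |x| = 2 * ∫⁻ x in Set.Ioc 0 a, g x := by
  calc ∫⁻ x in Set.Icc (-a) a, g |x|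
      = ∫⁻ x, (Set.Iic a).indicator g |x| := by
        rw [← lintegral_indicator measurableSet_Icc]
        simp only [Set.indicator, Set.mem_Icc, Set.mem_Iic, abs_le]
    _ = 2 * ∫⁻ x in Set.Ioc 0 a, g x := by
        rw [lintegral_comp_abs, setLIntegral_indicator measurableSet_Iic, Set.inter_comm,
          Set.Ioi_inter_Iic]

lemma setLIntegral_Ioc_ofReal_of_hasDerivAt {F f : ℝ → ℝ} {a b : ℝ} (hab : a ≤ b)
    (hcont : ContinuousOn F (Set.Icc a b)) (hderiv : ∀ x ∈ Set.Ioo a b, HasDerivAt F (f x) x)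
    (hf : ∀ x ∈ Set.Ioo a b, 0 ≤ f x) :
    ∫⁻ x in Set.Ioc a b, ENNReal.ofReal (f x) = ENNReal.ofReal (F b - F a) := by
  have hint : IntegrableOn f (Set.Ioc a b) :=
    intervalIntegral.integrableOn_deriv_of_nonneg hcont hderiv hf
  have hf_ae : 0 ≤ᵐ[volume.restrict (Set.Ioc a b)] f := by
    rw [← restrict_Ioo_eq_restrict_Ioc]
    exact ae_restrict_of_forall_mem measurableSet_Ioo hf
  rw [← ofReal_integral_eq_lintegral_ofReal hint hf_ae, ← intervalIntegral.integral_of_le hab,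
    intervalIntegral.integral_eq_sub_of_hasDerivAt_of_le hab hcont hderiv
      ((intervalIntegrable_iff_integrableOn_Ioc_of_le hab).2 hint)]

lemma setLIntegral_Ioc_exp_neg_div {a c b Z : ℝ} (hac : a ≤ c) (hb : b ≠ 0) (hZ : 0 ≤ Z) :
    ∫⁻ x in Set.Ioc a c, ENNReal.ofReal (exp (-x / b) / Z)
      = ENNReal.ofReal (b * (exp (-a / b) - exp (-c / b)) / Z) := by
  have hderiv (x : ℝ) :
      HasDerivAt (fun x => -(b / Z) * exp (-x / b)) (exp (-x / b) / Z) x := by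
    refine (((hasDerivAt_neg x).div_const b).exp.const_mul (-(b / Z))).congr_deriv ?_
    field_simp
  rw [setLIntegral_Ioc_ofReal_of_hasDerivAt hac (by fun_prop) (fun x _ => hderiv x)
    fun x _ => by positivity]
  ring_nf

lemma setLIntegral_Ioc_mul_exp_neg_div {a b Z : ℝ} (ha : 0 ≤ a) (hb : b ≠ 0) (hZ : 0 ≤ Z) :
    ∫⁻ x in Set.Ioc 0 a, ENNReal.ofReal (x * exp (-x / b) / Z)
      = ENNReal.ofReal (b * (b - (a + b) * exp (-a / b)) / Z) := by
  have hderiv (x : ℝ) :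
      HasDerivAt (fun x => -(b / Z) * ((x + b) * exp (-x / b))) (x * exp (-x / b) / Z) x := by
    refine ((((hasDerivAt_id' x).add_const b).mul
      ((hasDerivAt_neg x).div_const b).exp).const_mul (-(b / Z))).congr_deriv ?_
    field_simp
    ring
  rw [setLIntegral_Ioc_ofReal_of_hasDerivAt ha (by fun_prop) (fun x _ => hderiv x)
    fun x hx => div_nonneg (mul_nonneg hx.1.le (exp_pos _).le) hZ]
  congr 1
  simp only [neg_zero, zero_div, exp_zero]
  ring

lemma VoptL1_le_lintegral {ε δ Δ : ℝ} {P : Measure ℝ} [hP : IsProbabilityMeasure P]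
    (hDP : SatisfiesDP ε δ Δ P) : VoptL1 ε δ Δ ≤ ∫⁻ x, ENNReal.ofReal |x| ∂P :=
  (iInf₂_le P hP).trans (iInf_le _ hDP)

/- The integral below is the hockey-stick divergence of order `exp ε` between the noise and its
translate by `-d`; the subtraction in `ℝ≥0∞` is truncated, so it takes the positive part. -/
lemma satisfiesDP_withDensity {ε δ Δ : ℝ} {f : ℝ → ℝ≥0∞} (hf : Measurable f)
    (h : ∀ d, |d| ≤ Δ →
      ∫⁻ x, (f x - ENNReal.ofReal (exp ε) * f (x + d)) ≤ ENNReal.ofReal δ) :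
    SatisfiesDP ε δ Δ (volume.withDensity f) := by
  intro d hd S hS
  have hf_shift : Measurable fun x => f (x + d) := hf.comp (measurable_add_const d)
  have himage : volume.withDensity f ((fun s => s + d) '' S) = ∫⁻ x in S, f (x + d) := by
    have himage_meas : MeasurableSet ((fun s => s + d) '' S) :=
      (MeasurableEquiv.addRight d).measurableSet_image.2 hS
    rw [withDensity_apply _ himage_meas]
    exact ((measurePreserving_add_right volume d).setLIntegral_comp_emb
      (MeasurableEquiv.addRight d).measurableEmbedding f S).symm
  calc volume.withDensity f S
      = ∫⁻ x in S, f x := withDensity_apply _ hS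
    _ ≤ ∫⁻ x in S, (ENNReal.ofReal (exp ε) * f (x + d)
          + (f x - ENNReal.ofReal (exp ε) * f (x + d))) :=
        lintegral_mono fun _ => le_add_tsub
    _ = ENNReal.ofReal (exp ε) * volume.withDensity f ((fun s => s + d) '' S)
          + ∫⁻ x in S, (f x - ENNReal.ofReal (exp ε) * f (x + d)) := by
        rw [lintegral_add_left (hf_shift.const_mul _), lintegral_const_mul _ hf_shift, himage]
    _ ≤ ENNReal.ofReal (exp ε) * volume.withDensity f ((fun s => s + d) '' S)
          + ENNReal.ofReal δ := by
        gcongr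
        exact (setLIntegral_le_lintegral S _).trans (h d hd)

/-- The density of the Laplace distribution of scale `b` centred at `0`, conditioned on `[-A, A]`.
It is meaningful for `0 < b` and `0 < A`. -/
noncomputable def truncatedLaplacePDF (b A : ℝ) : ℝ → ℝ≥0∞ :=
  (Set.Icc (-A) A).indicator fun x =>
    ENNReal.ofReal (exp (-|x| / b) / (2 * b * (1 - exp (-A / b))))

/-- The noise distribution of the truncated Laplacian mechanism, with scale `b` and
support `[-A, A]`. -/
noncomputable def truncatedLaplace (b A : ℝ) : Measure ℝ :=
  volume.withDensity (truncatedLaplacePDF b A)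

namespace truncatedLaplace

lemma measurable_pdf (b A : ℝ) : Measurable (truncatedLaplacePDF b A) :=
  Measurable.indicator (by fun_prop) measurableSet_Icc

lemma pdf_neg (b A x : ℝ) : truncatedLaplacePDF b A (-x) = truncatedLaplacePDF b A x := by
  simp only [truncatedLaplacePDF, Set.indicator, Set.mem_Icc, ← abs_le, abs_neg]

variable {b A : ℝ}

lemma isProbabilityMeasure (hb : 0 < b) (hA : 0 < A) :
    IsProbabilityMeasure (truncatedLaplace b A) := by
  have hZ := one_sub_exp_neg_div_pos hb hA
  constructor
  calc truncatedLaplace b A Set.univ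
      = ∫⁻ x in Set.Icc (-A) A, ENNReal.ofReal (exp (-|x| / b) / (2 * b * (1 - exp (-A / b)))) := by
        rw [truncatedLaplace, withDensity_apply _ .univ, setLIntegral_univ, truncatedLaplacePDF,
          lintegral_indicator measurableSet_Icc]
    _ = 2 * ENNReal.ofReal (b * (exp (-0 / b) - exp (-A / b)) / (2 * b * (1 - exp (-A / b)))) := by
        rw [setLIntegral_Icc_comp_abs
            (fun x => ENNReal.ofReal (exp (-x / b) / (2 * b * (1 - exp (-A / b))))),
          setLIntegral_Ioc_exp_neg_div hA.le hb.ne' (by positivity)]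
    _ = 1 := by
        rw [← ENNReal.ofReal_ofNat 2, ← ENNReal.ofReal_mul zero_le_two, ENNReal.ofReal_eq_one]
        simp only [neg_zero, zero_div, exp_zero, neg_div] at hZ ⊢
        field_simp

lemma lintegral_abs (hb : 0 < b) (hA : 0 < A) :
    ∫⁻ x, ENNReal.ofReal |x| ∂truncatedLaplace b A
      = ENNReal.ofReal (b - A / (exp (A / b) - 1)) := by
  have hZ := one_sub_exp_neg_div_pos hb hA
  set Z := 2 * b * (1 - exp (-A / b)) with hZ_def
  have hZ_pos : 0 < Z := by positivity
  calc ∫⁻ x, ENNReal.ofReal |x| ∂truncatedLaplace b A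
      = ∫⁻ x in Set.Icc (-A) A, ENNReal.ofReal (|x| * exp (-|x| / b) / Z) := by
        rw [truncatedLaplace, truncatedLaplacePDF, withDensity_indicator measurableSet_Icc,
          lintegral_withDensity_eq_lintegral_mul _ (by fun_prop) (by fun_prop)]
        refine lintegral_congr fun x => ?_
        rw [Pi.mul_apply, ← ENNReal.ofReal_mul (by positivity), mul_comm, mul_div_assoc]
    _ = 2 * ENNReal.ofReal (b * (b - (A + b) * exp (-A / b)) / Z) := by
        rw [setLIntegral_Icc_comp_abs (fun x => ENNReal.ofReal (x * exp (-x / b) / Z)),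
          setLIntegral_Ioc_mul_exp_neg_div hA.le hb.ne' hZ_pos.le]
    _ = ENNReal.ofReal (b - A / (exp (A / b) - 1)) := by
        have hE : 0 < exp (A / b) - 1 := sub_pos.2 (one_lt_exp_iff.2 (div_pos hA hb))
        rw [← ENNReal.ofReal_ofNat 2, ← ENNReal.ofReal_mul zero_le_two]
        congr 1
        rw [neg_div, exp_neg] at hZ_def hZ
        rw [hZ_def, neg_div, exp_neg]
        have hne : exp (A / b) ≠ 0 := (exp_pos _).ne'
        field_simp
        ring

lemma pdf_le_exp_mul_pdf_add {Δ d x : ℝ} (hb : 0 < b) (hA : 0 < A) (hd : |d| ≤ Δ)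
    (hx : x + d ∈ Set.Icc (-A) A) :
    truncatedLaplacePDF b A x
      ≤ ENNReal.ofReal (exp (Δ / b)) * truncatedLaplacePDF b A (x + d) := by
  have hZ := one_sub_exp_neg_div_pos hb hA
  rw [truncatedLaplacePDF, Set.indicator_of_mem hx, ← ENNReal.ofReal_mul (exp_pos _).le]
  refine (Set.indicator_le_self _ _ _).trans (ENNReal.ofReal_le_ofReal ?_)
  rw [← mul_div_assoc, ← exp_add, ← add_div]
  gcongr
  linarith [abs_add_le x d]

/- The density exceeds `exp (Δ / b)` times its translate only on `(A - d, A]`, where `x + d` has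
left the support. If `A < Δ`, the interval `(A - Δ, A]` contains negative points, and
`-|x| ≤ -x` still bounds the density there. -/
lemma pdf_tsub_le_indicator {Δ d : ℝ} (hb : 0 < b) (hA : 0 < A) (hd₀ : 0 ≤ d) (hd : d ≤ Δ)
    (x : ℝ) :
    truncatedLaplacePDF b A x - ENNReal.ofReal (exp (Δ / b)) * truncatedLaplacePDF b A (x + d)
      ≤ (Set.Ioc (A - Δ) A).indicator
          (fun x => ENNReal.ofReal (exp (-x / b) / (2 * b * (1 - exp (-A / b))))) x := by
  have hZ := one_sub_exp_neg_div_pos hb hA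
  by_cases hx : x ∈ Set.Icc (-A) A
  · by_cases hxd : x + d ∈ Set.Icc (-A) A
    · have hle := pdf_le_exp_mul_pdf_add hb hA ((abs_of_nonneg hd₀).trans_le hd) hxd
      rw [tsub_eq_zero_of_le hle]
      exact zero_le
    · have hxd' : A < x + d := by
        by_contra! hle
        exact hxd ⟨by linarith [hx.1], hle⟩
      refine tsub_le_self.trans ?_
      rw [truncatedLaplacePDF, Set.indicator_of_mem hx,
        Set.indicator_of_mem (show x ∈ Set.Ioc (A - Δ) A from ⟨by linarith, hx.2⟩)]
      gcongr
      exact le_abs_self x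
  · rw [truncatedLaplacePDF, Set.indicator_of_notMem hx, zero_tsub]
    exact zero_le

lemma lintegral_pdf_tsub_le {Δ d : ℝ} (hb : 0 < b) (hA : 0 < A) (hd : |d| ≤ Δ) :
    ∫⁻ x, (truncatedLaplacePDF b A x
        - ENNReal.ofReal (exp (Δ / b)) * truncatedLaplacePDF b A (x + d))
      ≤ ENNReal.ofReal ((exp (Δ / b) - 1) / (2 * (exp (A / b) - 1))) := by
  wlog hd₀ : 0 ≤ d generalizing d
  · rw [← lintegral_neg_eq_self]
    convert this (d := -d) (by rwa [abs_neg]) (by linarith) using 4 with x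
    · exact pdf_neg b A x
    · rw [← pdf_neg, neg_add, neg_neg]
  have hZ := one_sub_exp_neg_div_pos hb hA
  have hΔ : 0 ≤ Δ := (abs_nonneg d).trans hd
  calc _ ≤ ∫⁻ x in Set.Ioc (A - Δ) A,
          ENNReal.ofReal (exp (-x / b) / (2 * b * (1 - exp (-A / b)))) := by
        rw [← lintegral_indicator measurableSet_Ioc]
        exact lintegral_mono (pdf_tsub_le_indicator hb hA hd₀ ((le_abs_self d).trans hd))
    _ = ENNReal.ofReal (b * (exp (-(A - Δ) / b) - exp (-A / b))
          / (2 * b * (1 - exp (-A / b)))) :=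
        setLIntegral_Ioc_exp_neg_div (by linarith) hb.ne' (by positivity)
    _ = ENNReal.ofReal ((exp (Δ / b) - 1) / (2 * (exp (A / b) - 1))) := by
        have hE : 0 < exp (A / b) - 1 := sub_pos.2 (one_lt_exp_iff.2 (div_pos hA hb))
        congr 1
        rw [show -(A - Δ) / b = Δ / b + -A / b by ring, exp_add]
        rw [neg_div, exp_neg] at hZ ⊢
        have hne : exp (A / b) ≠ 0 := (exp_pos _).ne'
        field_simp

lemma satisfiesDP (Δ : ℝ) (hb : 0 < b) (hA : 0 < A) :
    SatisfiesDP (Δ / b) ((exp (Δ / b) - 1) / (2 * (exp (A / b) - 1))) Δ (truncatedLaplace b A) :=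
  satisfiesDP_withDensity (measurable_pdf b A) fun _ hd => lintegral_pdf_tsub_le hb hA hd

end truncatedLaplace

lemma VoptL1_le_of_truncatedLaplace {b A : ℝ} (Δ : ℝ) (hb : 0 < b) (hA : 0 < A) :
    VoptL1 (Δ / b) ((exp (Δ / b) - 1) / (2 * (exp (A / b) - 1))) Δ
      ≤ ENNReal.ofReal (b - A / (exp (A / b) - 1)) := by
  have := truncatedLaplace.isProbabilityMeasure hb hA
  rw [← truncatedLaplace.lintegral_abs hb hA]
  exact VoptL1_le_lintegral (truncatedLaplace.satisfiesDP Δ hb hA)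

theorem VoptL1_upper_bound_general
    (ε δ Δ : ℝ) (hδ0 : 0 < δ) (hε : 0 < ε) (hΔ : 0 < Δ) :
    VoptL1 ε δ Δ
      ≤ ENNReal.ofReal ((Δ / ε) * (1 - Real.log (1 + (Real.exp ε - 1) / (2 * δ))
          / ((Real.exp ε - 1) / (2 * δ)))) := by
  have hexp : 0 < exp ε - 1 := sub_pos.2 (one_lt_exp_iff.2 hε)
  set u := (exp ε - 1) / (2 * δ) with hu
  have hu_pos : 0 < u := by positivity
  set b := Δ / ε
  have hb : 0 < b := div_pos hΔ hε
  have hA : 0 < b * log (1 + u) := mul_pos hb (log_pos (by linarith))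
  have hexpA : exp (b * log (1 + u) / b) - 1 = u := by
    rw [mul_div_cancel_left₀ _ hb.ne', exp_log (by linarith), add_sub_cancel_left]
  have hε_eq : Δ / b = ε := div_div_cancel₀ hΔ.ne'
  have hδ_eq : (exp ε - 1) / (2 * u) = δ := by
    rw [hu]
    field_simp
  have hbound := VoptL1_le_of_truncatedLaplace Δ hb hA
  rwa [hexpA, hε_eq, hδ_eq, mul_div_assoc, ← mul_one_sub] at hbound

/-- Upper bound on the minimum noise amplitude achieved by the
truncated Laplacian mechanism:
`V_opt^{L1}(ε, δ, Δ) ≤ (Δ/ε)(1 − log(1 + (e^ε − 1)/(2δ)) / ((e^ε − 1)/(2δ)))`. -/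
theorem VoptL1_upper_bound
    (ε δ Δ : ℝ) (hδ0 : 0 < δ) (hδ : δ < 1 / 2) (hε : 0 < ε) (hΔ : 0 < Δ) :
    VoptL1 ε δ Δ
      ≤ ENNReal.ofReal ((Δ / ε) * (1 - Real.log (1 + (Real.exp ε - 1) / (2 * δ))
          / ((Real.exp ε - 1) / (2 * δ)))) :=
  VoptL1_upper_bound_general ε δ Δ hδ0 hε hΔ
end

section
/- Let ε > 0, δ > 0, Δ > 0, set a = (δ + (e^ε − 1)/2)/e^ε and b = e^{−ε}, and suppose n is a positive integer with Σ_{k=0}^{n−1} a·b^k = 1/2. Then the minimum noise power satisfies the lower bound V_opt^{L2}(ε, δ, Δ) ≥ 2a·Δ²·Σ_{k=0}^{n−1} b^k·k². -/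
/-!
Shifting the half-lines `[t, ∞)` and `(-∞, -t]` outwards by `Δ`, the privacy constraint bounds the
two-sided tails `F t = P {x | t ≤ |x|}` from below: `F t ≤ e^ε F (t + Δ) + 2δ`. The numbers
`1 - 2 ∑_{j<k} a b^j` satisfy this recurrence with equality and start at `1 = F 0`, so they bound
`F (k Δ)` from below. Hence under `P` the variable `|x|` stochastically dominates the discrete
distribution with mass `2 a b^k` at `k Δ` for `k < n` and the remaining mass at `n Δ`, and summation
by parts turns this domination into an inequality of second moments.
-/

open MeasureTheory Real

/-- The minimum noise power: the infimum of `∫ x² dP(x)` over all Borel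
probability measures `P` on ℝ satisfying the (ε,δ)-DP constraint with sensitivity Δ. -/
noncomputable def VoptL2 (ε δ Δ : ℝ) : ENNReal :=
  ⨅ (P : Measure ℝ) (_ : IsProbabilityMeasure P) (_ : SatisfiesDP ε δ Δ P),
    ∫⁻ x : ℝ, ENNReal.ofReal (x ^ 2) ∂P

theorem sum_mul_add_sub_sum_mul {R : Type*} [CommRing R] (c : R) (w f : ℕ → R) (n : ℕ) :
    ∑ k ∈ Finset.range n, w k * f k + (c - ∑ k ∈ Finset.range n, w k) * f n =
      c * f 0 + ∑ k ∈ Finset.range n,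
        (c - ∑ j ∈ Finset.range (k + 1), w j) * (f (k + 1) - f k) := by
  induction n with
  | zero => simp
  | succ n ih =>
    rw [Finset.sum_range_succ (fun k => _ * (_ - _)), ← add_assoc, ← ih, Finset.sum_range_succ,
      Finset.sum_range_succ]
    ring

theorem mul_one_sub_two_mul_geom_sum_add {R : Type*} [CommRing R] {c δ a b : R}
    (ha : 2 * (c * a) = 2 * δ + (c - 1)) (hb : c * b = 1) (k : ℕ) :
    c * (1 - 2 * ∑ j ∈ Finset.range (k + 1), a * b ^ j) + 2 * δ =
      1 - 2 * ∑ j ∈ Finset.range k, a * b ^ j := by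
  have hshift : c * ∑ j ∈ Finset.range k, a * b ^ (j + 1) = ∑ j ∈ Finset.range k, a * b ^ j := by
    rw [Finset.mul_sum]
    refine Finset.sum_congr rfl fun j _ => ?_
    linear_combination a * b ^ j * hb
  rw [Finset.sum_range_succ', pow_zero, mul_one]
  linear_combination -2 * hshift - ha

section LayerCake

variable {α : Type*} {A : ℕ → Set α}

theorem add_sum_indicator_le {M : Type*} [AddCommGroup M] [LE M] {f : ℕ → M} {c : M}
    (hA : Antitone A) {x : α} (h0 : f 0 ≤ c) (hc : ∀ k, x ∈ A k → f k ≤ c) (n : ℕ) :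
    f 0 + ∑ k ∈ Finset.range n, (A (k + 1)).indicator (fun _ => f (k + 1) - f k) x ≤ c := by
  induction n with
  | zero => simpa using h0
  | succ n ih =>
    by_cases hx : x ∈ A (n + 1)
    · have htelescope : ∑ k ∈ Finset.range (n + 1),
          (A (k + 1)).indicator (fun _ => f (k + 1) - f k) x = f (n + 1) - f 0 := by
        rw [← Finset.sum_range_sub]
        refine Finset.sum_congr rfl fun k hk => Set.indicator_of_mem (hA ?_ hx) _
        exact Finset.mem_range.mp hk
      rw [htelescope, add_sub_cancel]
      exact hc _ hx
    · rwa [Finset.sum_range_succ, Set.indicator_of_notMem hx, add_zero]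

variable [MeasurableSpace α] {μ : Measure α} {g : α → ℝ}

theorem ofReal_integral_le_lintegral_ofReal (hg : Integrable g μ) :
    ENNReal.ofReal (∫ x, g x ∂μ) ≤ ∫⁻ x, ENNReal.ofReal (g x) ∂μ := by
  rw [integral_eq_lintegral_pos_part_sub_lintegral_neg_part hg]
  exact ENNReal.ofReal_le_of_le_toReal (sub_le_self _ ENNReal.toReal_nonneg)

variable [IsProbabilityMeasure μ] {f : ℕ → ℝ}

theorem ofReal_add_sum_measureReal_mul_le_lintegral (hA : Antitone A)
    (hA_meas : ∀ k, MeasurableSet (A k)) (h0 : ∀ x, f 0 ≤ g x)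
    (hg : ∀ k, ∀ x ∈ A k, f k ≤ g x) (n : ℕ) :
    ENNReal.ofReal (f 0 + ∑ k ∈ Finset.range n, μ.real (A (k + 1)) * (f (k + 1) - f k)) ≤
      ∫⁻ x, ENNReal.ofReal (g x) ∂μ := by
  have hint (k : ℕ) : Integrable ((A (k + 1)).indicator fun _ => f (k + 1) - f k) μ :=
    (integrable_const _).indicator (hA_meas _)
  have hintegral : ∫ x, f 0 + ∑ k ∈ Finset.range n,
      (A (k + 1)).indicator (fun _ => f (k + 1) - f k) x ∂μ =
        f 0 + ∑ k ∈ Finset.range n, μ.real (A (k + 1)) * (f (k + 1) - f k) := by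
    rw [integral_add (integrable_const _) (integrable_finsetSum _ fun k _ => hint k),
      integral_finsetSum _ fun k _ => hint k]
    simp [integral_indicator_const, hA_meas]
  rw [← hintegral]
  refine (ofReal_integral_le_lintegral_ofReal <| (integrable_const _).add <|
    integrable_finsetSum _ fun k _ => hint k).trans (lintegral_mono fun x => ?_)
  gcongr
  exact add_sum_indicator_le hA (h0 x) (fun k => hg k x) n

theorem ofReal_sum_mul_add_le_lintegral_of_tail_le (hA : Antitone A)
    (hA_meas : ∀ k, MeasurableSet (A k)) (hf : Monotone f) (h0 : ∀ x, f 0 ≤ g x)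
    (hg : ∀ k, ∀ x ∈ A k, f k ≤ g x) {w : ℕ → ℝ}
    (hw : ∀ k, 1 - ∑ j ∈ Finset.range k, w j ≤ μ.real (A k)) (n : ℕ) :
    ENNReal.ofReal
        (∑ k ∈ Finset.range n, w k * f k + (1 - ∑ k ∈ Finset.range n, w k) * f n) ≤
      ∫⁻ x, ENNReal.ofReal (g x) ∂μ := by
  refine le_trans ?_ (ofReal_add_sum_measureReal_mul_le_lintegral hA hA_meas h0 hg n)
  rw [sum_mul_add_sub_sum_mul, one_mul]
  gcongr with k
  · simpa using hf k.le_succ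
  · exact hw (k + 1)

end LayerCake

theorem setOf_le_abs {α : Type*} [AddCommGroup α] [LinearOrder α] [IsOrderedAddMonoid α] (t : α) :
    {x | t ≤ |x|} = Set.Ici t ∪ Set.Iic (-t) :=
  Set.ext fun _ => le_abs'.trans or_comm

theorem measureReal_setOf_le_abs (μ : Measure ℝ) [IsFiniteMeasure μ] {t : ℝ} (ht : 0 < t) :
    μ.real {x | t ≤ |x|} = μ.real (Set.Ici t) + μ.real (Set.Iic (-t)) := by
  have hdisj : Disjoint (Set.Ici t) (Set.Iic (-t)) :=
    (Set.Iic_disjoint_Ici.mpr (by linarith)).symm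
  rw [setOf_le_abs, measureReal_union hdisj measurableSet_Iic]

namespace SatisfiesDP

variable {ε δ Δ : ℝ} {P : Measure ℝ}

section Shift

variable [IsFiniteMeasure P]

theorem measureReal_le (hP : SatisfiesDP ε δ Δ P) (hδ : 0 ≤ δ) {d : ℝ} (hd : |d| ≤ Δ)
    {S : Set ℝ} (hS : MeasurableSet S) :
    P.real S ≤ exp ε * P.real ((fun s => s + d) '' S) + δ := by
  have h := ENNReal.toReal_mono (by finiteness) (hP d hd S hS)
  rwa [ENNReal.toReal_add (by finiteness) (by finiteness), ENNReal.toReal_mul,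
    ENNReal.toReal_ofReal (exp_pos _).le, ENNReal.toReal_ofReal hδ] at h

theorem measureReal_setOf_le_abs_le (hP : SatisfiesDP ε δ Δ P) (hδ : 0 ≤ δ) {t d : ℝ}
    (hd : |d| ≤ Δ) (htd : 0 < t + d) :
    P.real {x | t ≤ |x|} ≤ exp ε * P.real {x | t + d ≤ |x|} + 2 * δ := by
  have hright : P.real (Set.Ici t) ≤ exp ε * P.real (Set.Ici (t + d)) + δ := by
    simpa only [Set.image_add_const_Ici] using hP.measureReal_le hδ hd measurableSet_Ici
  have hleft : P.real (Set.Iic (-t)) ≤ exp ε * P.real (Set.Iic (-(t + d))) + δ := by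
    simpa only [Set.image_add_const_Iic, ← neg_add] using
      hP.measureReal_le hδ ((abs_neg d).trans_le hd) (measurableSet_Iic (a := -t))
  calc P.real {x | t ≤ |x|}
      ≤ P.real (Set.Ici t) + P.real (Set.Iic (-t)) :=
        setOf_le_abs t ▸ measureReal_union_le _ _
    _ ≤ exp ε * (P.real (Set.Ici (t + d)) + P.real (Set.Iic (-(t + d)))) + 2 * δ := by linarith
    _ = exp ε * P.real {x | t + d ≤ |x|} + 2 * δ := by rw [measureReal_setOf_le_abs P htd]

end Shift

variable {a b : ℝ} [IsProbabilityMeasure P]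

theorem one_sub_two_mul_geom_sum_le_measureReal (hP : SatisfiesDP ε δ Δ P) (hδ : 0 ≤ δ) (hΔ : 0 < Δ)
    (ha : 2 * (exp ε * a) = 2 * δ + (exp ε - 1)) (hb : exp ε * b = 1) (k : ℕ) :
    1 - 2 * ∑ j ∈ Finset.range k, a * b ^ j ≤ P.real {x | k * Δ ≤ |x|} := by
  induction k with
  | zero => simp
  | succ k ih =>
    have hstep := hP.measureReal_setOf_le_abs_le hδ (t := k * Δ) (abs_of_pos hΔ).le (by positivity)
    have hscaled : exp ε * (1 - 2 * ∑ j ∈ Finset.range (k + 1), a * b ^ j) ≤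
        exp ε * P.real {x | k * Δ + Δ ≤ |x|} := by
      linarith [mul_one_sub_two_mul_geom_sum_add ha hb k]
    rw [Nat.cast_succ, add_one_mul]
    exact le_of_mul_le_mul_left hscaled (exp_pos ε)

theorem ofReal_sum_mul_add_le_lintegral_abs (hP : SatisfiesDP ε δ Δ P) (hδ : 0 ≤ δ) (hΔ : 0 < Δ)
    (ha : 2 * (exp ε * a) = 2 * δ + (exp ε - 1)) (hb : exp ε * b = 1)
    {φ : ℝ → ℝ} (hφ : MonotoneOn φ (Set.Ici 0)) (n : ℕ) :
    ENNReal.ofReal (∑ k ∈ Finset.range n, 2 * (a * b ^ k) * φ (k * Δ) +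
        (1 - 2 * ∑ k ∈ Finset.range n, a * b ^ k) * φ (n * Δ)) ≤
      ∫⁻ x, ENNReal.ofReal (φ |x|) ∂P := by
  have hnonneg (k : ℕ) : 0 ≤ k * Δ := by positivity
  have hmono : Monotone fun k : ℕ => k * Δ := fun k l hkl => by dsimp only; gcongr
  have htail (k : ℕ) : 1 - ∑ j ∈ Finset.range k, 2 * (a * b ^ j) ≤ P.real {x | k * Δ ≤ |x|} := by
    rw [← Finset.mul_sum]
    exact hP.one_sub_two_mul_geom_sum_le_measureReal hδ hΔ ha hb k
  rw [Finset.mul_sum]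
  refine ofReal_sum_mul_add_le_lintegral_of_tail_le (A := fun k : ℕ => {x : ℝ | k * Δ ≤ |x|})
    (f := fun k => φ (k * Δ)) (fun k l hkl x hx => (hmono hkl).trans hx)
    (fun k => measurableSet_le measurable_const measurable_norm)
    (fun k l hkl => hφ (hnonneg k) (hnonneg l) (hmono hkl)) (fun x => ?_)
    (fun k x hx => hφ (hnonneg k) (abs_nonneg x) hx) htail n
  exact hφ (hnonneg 0) (abs_nonneg x) (by simp)

end SatisfiesDP

theorem VoptL2_lower_bound_general {ε δ Δ : ℝ} (hδ : 0 ≤ δ) (hΔ : 0 < Δ) {a b : ℝ}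
    (ha : a = (δ + (exp ε - 1) / 2) / exp ε) (hb : b = exp (-ε)) (n : ℕ) :
    VoptL2 ε δ Δ
      ≥ ENNReal.ofReal (2 * a * Δ ^ 2 * ∑ k ∈ Finset.range n, b ^ k * (k : ℝ) ^ 2 +
          (1 - 2 * ∑ k ∈ Finset.range n, a * b ^ k) * (n * Δ) ^ 2) := by
  refine le_iInf fun P => le_iInf fun _ => le_iInf fun hP => ?_
  have ha' : 2 * (exp ε * a) = 2 * δ + (exp ε - 1) := by
    rw [ha, mul_div_cancel₀ _ (exp_ne_zero ε)]
    ring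
  have hb' : exp ε * b = 1 := by rw [hb, exp_neg, mul_inv_cancel₀ (exp_ne_zero ε)]
  have hsum : ∑ k ∈ Finset.range n, 2 * (a * b ^ k) * (k * Δ) ^ 2 =
      2 * a * Δ ^ 2 * ∑ k ∈ Finset.range n, b ^ k * (k : ℝ) ^ 2 := by
    rw [Finset.mul_sum]
    exact Finset.sum_congr rfl fun k _ => by ring
  simpa only [hsum, sq_abs] using
    hP.ofReal_sum_mul_add_le_lintegral_abs hδ hΔ ha' hb' (pow_left_monotoneOn (n := 2)) n

/-- Lower bound on the minimum noise power:
`V_opt^{L2}(ε, δ, Δ) ≥ 2aΔ² Σ_{k=0}^{n−1} b^k k²`. -/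
theorem VoptL2_lower_bound
    (ε δ Δ : ℝ) (hε : 0 < ε) (hδ : 0 < δ) (hΔ : 0 < Δ)
    (a b : ℝ)
    (ha : a = (δ + (Real.exp ε - 1) / 2) / Real.exp ε)
    (hb : b = Real.exp (-ε))
    (n : ℕ) (hn : 0 < n)
    (hhalf : ∑ k ∈ Finset.range n, a * b ^ k = 1 / 2) :
    VoptL2 ε δ Δ
      ≥ ENNReal.ofReal (2 * a * Δ ^ 2 * ∑ k ∈ Finset.range n, b ^ k * (k : ℝ) ^ 2) := by
  simpa [hhalf] using VoptL2_lower_bound_general hδ.le hΔ ha hb n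
end
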